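/- arXiv:1001.1032 — 4 statements merged into one kernel-verified Lean document; each statement's English description precedes it below -/
import Mathlib

section
/- Let Q be a real 3×3 symmetric traceless matrix and let ε > 0. Then tr(Q³) ≤ (3ε/8)·(tr(Q²))² + (1/ε)·tr(Q²). -/
/-!
The trace of a product is a pairing of entries, so Cauchy–Schwarz gives `|tr (A B)| ≤ ‖A‖ ‖B‖` for
the Frobenius norm. As that norm is submultiplicative, `|tr (Q³)| ≤ ‖Q‖ ^ 3`, while
`tr (Q²) = ‖Q‖ ^ 2` when `Q` is Hermitian. It remains to interpolate `r ^ 3` between `r ^ 4` and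
`r ^ 2` by expanding `0 ≤ (ε / 2 * r ^ 2 - r) ^ 2 / ε`.
-/

theorem pow_three_le_mul_pow_four_add_mul_sq {K : Type*} [Field K] [LinearOrder K]
    [IsStrictOrderedRing K] {ε : K} (hε : 0 < ε) (r : K) :
    r ^ 3 ≤ ε / 4 * r ^ 4 + 1 / ε * r ^ 2 := by
  have expand : (ε / 2 * r ^ 2 - r) ^ 2 / ε = ε / 4 * r ^ 4 + 1 / ε * r ^ 2 - r ^ 3 := by
    field_simp
    ring
  rw [← sub_nonneg, ← expand]
  positivity

section Frobenius

open scoped Matrix Matrix.Norms.Frobenius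

variable {m n 𝕜 : Type*} [Fintype m] [Fintype n]

theorem frobenius_norm_eq_sqrt {E : Type*} [SeminormedAddCommGroup E] (A : Matrix m n E) :
    ‖A‖ = √(∑ p : m × n, ‖A p.1 p.2‖ ^ 2) := by
  simp only [Matrix.frobenius_norm_def, Real.rpow_two, Real.sqrt_eq_rpow, Fintype.sum_prod_type]

theorem norm_trace_mul_le_frobenius_norm_mul {R : Type*} [NonUnitalSeminormedRing R]
    (A : Matrix m n R) (B : Matrix n m R) : ‖(A * B).trace‖ ≤ ‖A‖ * ‖B‖ := by
  calc ‖(A * B).trace‖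
      = ‖∑ p : m × n, A p.1 p.2 * Bᵀ p.1 p.2‖ := by
        simp only [Matrix.trace, Matrix.diag_apply, Matrix.mul_apply, Matrix.transpose_apply,
          Fintype.sum_prod_type]
    _ ≤ ∑ p : m × n, ‖A p.1 p.2‖ * ‖Bᵀ p.1 p.2‖ := norm_sum_le_of_le _ fun _ _ ↦ norm_mul_le _ _
    _ ≤ ‖A‖ * ‖Bᵀ‖ := by
        simpa only [frobenius_norm_eq_sqrt] using Real.sum_mul_le_sqrt_mul_sqrt Finset.univ _ _
    _ = ‖A‖ * ‖B‖ := by rw [Matrix.frobenius_norm_transpose]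

variable [RCLike 𝕜]

theorem trace_conjTranspose_mul_self_eq_frobenius_norm_sq (A : Matrix m n 𝕜) :
    (Aᴴ * A).trace = ((‖A‖ ^ 2 : ℝ) : 𝕜) := by
  rw [frobenius_norm_eq_sqrt, Real.sq_sqrt (by positivity), Fintype.sum_prod_type_right]
  simp only [Matrix.trace, Matrix.diag_apply, Matrix.mul_apply, Matrix.conjTranspose_apply,
    RCLike.star_def, RCLike.conj_mul, RCLike.ofReal_sum, RCLike.ofReal_pow]

variable [DecidableEq n]

theorem norm_trace_pow_le_frobenius_norm_pow (A : Matrix n n 𝕜) {k : ℕ} (hk : 2 ≤ k) :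
    ‖(A ^ k).trace‖ ≤ ‖A‖ ^ k := by
  obtain ⟨j, rfl⟩ := Nat.exists_eq_add_of_le' hk
  calc ‖(A ^ (j + 2)).trace‖
      = ‖(A * A ^ (j + 1)).trace‖ := by rw [← pow_succ']
    _ ≤ ‖A‖ * ‖A ^ (j + 1)‖ := norm_trace_mul_le_frobenius_norm_mul _ _
    _ ≤ ‖A‖ * ‖A‖ ^ (j + 1) := by gcongr; exact norm_pow_le' A j.succ_pos
    _ = ‖A‖ ^ (j + 2) := (pow_succ' _ _).symm

theorem re_trace_sq_of_isHermitian {A : Matrix n n 𝕜} (hA : A.IsHermitian) :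
    RCLike.re (A ^ 2).trace = ‖A‖ ^ 2 := by
  have trace_sq := trace_conjTranspose_mul_self_eq_frobenius_norm_sq A
  rw [hA.eq, ← sq] at trace_sq
  rw [trace_sq, RCLike.ofReal_re]

end Frobenius

theorem trace_cube_le_general {n 𝕜 : Type*} [Fintype n] [DecidableEq n] [RCLike 𝕜]
    {Q : Matrix n n 𝕜} (hQ : Q.IsHermitian) {ε : ℝ} (hε : 0 < ε) :
    RCLike.re (Q ^ 3).trace ≤
      ε / 4 * RCLike.re (Q ^ 2).trace ^ 2 + 1 / ε * RCLike.re (Q ^ 2).trace := by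
  open scoped Matrix.Norms.Frobenius in
  calc RCLike.re (Q ^ 3).trace
      ≤ ‖Q‖ ^ 3 :=
        (RCLike.re_le_norm _).trans (norm_trace_pow_le_frobenius_norm_pow Q (by norm_num))
    _ ≤ ε / 4 * ‖Q‖ ^ 4 + 1 / ε * ‖Q‖ ^ 2 := pow_three_le_mul_pow_four_add_mul_sq hε _
    _ = ε / 4 * RCLike.re (Q ^ 2).trace ^ 2 + 1 / ε * RCLike.re (Q ^ 2).trace := by
        rw [re_trace_sq_of_isHermitian hQ, ← pow_mul]

/-- For a real 3×3 symmetric traceless matrix `Q` and every `ε > 0`,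
`tr(Q³) ≤ (3ε/8)·(tr(Q²))² + (1/ε)·tr(Q²)`. -/
theorem trace_cube_le (Q : Matrix (Fin 3) (Fin 3) ℝ)
    (hsymm : Q.IsSymm) (htr : Q.trace = 0) (ε : ℝ) (hε : 0 < ε) :
    (Q ^ 3).trace ≤ (3 * ε / 8) * ((Q ^ 2).trace) ^ 2 + (1 / ε) * (Q ^ 2).trace := by
  refine (trace_cube_le_general (Matrix.isHermitian_iff_isSymm.mpr hsymm) hε).trans ?_
  gcongr ?_ * _ + _
  linarith
end

section
/- For all real numbers x, y and every ε > 0 one has −3xy(x+y) ≤ (3ε/2)·(x² + y² + xy)² + (2/ε)·(x² + y² + xy). -/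
/-!
Young's inequality with weight `ε`, applied to the product of `-(x * y)` and `x + y`, splits the
cubic term into `(x * y) ^ 2` and `(x + y) ^ 2`. These are controlled by the square and the first
power of `x ^ 2 + y ^ 2 + x * y` respectively.
-/

section OrderedRing

variable {R : Type*} [CommRing R] [LinearOrder R] [IsStrictOrderedRing R]

lemma mul_sq_le_sq_add_sq_add_mul_sq (x y : R) :
    (x * y) ^ 2 ≤ (x ^ 2 + y ^ 2 + x * y) ^ 2 :=
  calc
    (x * y) ^ 2 ≤ (x * y) ^ 2 + (x ^ 2 + y ^ 2) * (x + y) ^ 2 :=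
      le_add_of_nonneg_right (by positivity)
    _ = (x ^ 2 + y ^ 2 + x * y) ^ 2 := by ring

lemma three_mul_add_sq_le_four_mul_sq_add_sq_add_mul (x y : R) :
    3 * (x + y) ^ 2 ≤ 4 * (x ^ 2 + y ^ 2 + x * y) :=
  calc
    3 * (x + y) ^ 2 ≤ 3 * (x + y) ^ 2 + (x - y) ^ 2 := le_add_of_nonneg_right (sq_nonneg _)
    _ = 4 * (x ^ 2 + y ^ 2 + x * y) := by ring

end OrderedRing

theorem scalar_cubic_ineq_general {K : Type*} [Field K] [LinearOrder K] [IsStrictOrderedRing K]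
    (x y : K) {ε : K} (hε : 0 < ε) :
    -3 * x * y * (x + y) ≤ (3 * ε / 2) * (x ^ 2 + y ^ 2 + x * y) ^ 2
      + (2 / ε) * (x ^ 2 + y ^ 2 + x * y) :=
  calc
    -3 * x * y * (x + y) = 3 / 2 * (2 * -(x * y) * (x + y)) := by ring
    _ ≤ 3 / 2 * (ε * (-(x * y)) ^ 2 + ε⁻¹ * (x + y) ^ 2) := by
      gcongr
      exact two_mul_le_add_mul_sq hε
    _ = 3 * ε / 2 * (x * y) ^ 2 + ε⁻¹ / 2 * (3 * (x + y) ^ 2) := by ring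
    _ ≤ 3 * ε / 2 * (x ^ 2 + y ^ 2 + x * y) ^ 2 + ε⁻¹ / 2 * (4 * (x ^ 2 + y ^ 2 + x * y)) := by
      gcongr ?_ * ?_ + ?_ * ?_
      · exact mul_sq_le_sq_add_sq_add_mul_sq x y
      · exact three_mul_add_sq_le_four_mul_sq_add_sq_add_mul x y
    _ = 3 * ε / 2 * (x ^ 2 + y ^ 2 + x * y) ^ 2 + 2 / ε * (x ^ 2 + y ^ 2 + x * y) := by ring

/-- For all real `x, y` and every `ε > 0`,
`−3xy(x+y) ≤ (3ε/2)(x² + y² + xy)² + (2/ε)(x² + y² + xy)`. -/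
theorem scalar_cubic_ineq (x y ε : ℝ) (hε : 0 < ε) :
    -3 * x * y * (x + y) ≤ (3 * ε / 2) * (x ^ 2 + y ^ 2 + x * y) ^ 2
      + (2 / ε) * (x ^ 2 + y ^ 2 + x * y) :=
  scalar_cubic_ineq_general x y hε
end

section
/- Let d ≥ 1. Let Q', Q : ℝ^d → M_d(ℝ) be smooth compactly supported fields of symmetric matrices and let u : ℝ^d → ℝ^d be a smooth compactly supported vector field. Define Ω_{αβ}(x) = (1/2)(∂_β u_α(x) − ∂_α u_β(x)) and let ΔQ denote the componentwise Laplacian of Q. Then ∫_{ℝ^d} tr( (Ω(x)Q'(x) − Q'(x)Ω(x)) · ΔQ(x) ) dx − ∫_{ℝ^d} Σ_{α,β,γ} ∂_β( Q'_{αγ}(x) ΔQ_{γβ}(x) − ΔQ_{αγ}(x) Q'_{γβ}(x) ) u_α(x) dx = 0. -/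
open MeasureTheory

/-- partial derivative in the `γ`-th coordinate direction on `ℝ^d`. -/
noncomputable def pd {d : ℕ} (γ : Fin d) (f : (Fin d → ℝ) → ℝ) (x : Fin d → ℝ) : ℝ :=
  fderiv ℝ f x (Pi.single γ 1)

/-- componentwise Laplacian on `ℝ^d`. -/
noncomputable def lap {d : ℕ} (f : (Fin d → ℝ) → ℝ) (x : Fin d → ℝ) : ℝ :=
  ∑ γ, pd γ (pd γ f) x

/-- vorticity tensor `Ω_{αβ} = (1/2)(∂_β u_α − ∂_α u_β)`. -/
noncomputable def vort {d : ℕ} (u : (Fin d → ℝ) → Fin d → ℝ) (x : Fin d → ℝ)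
    (α β : Fin d) : ℝ :=
  (1 / 2) * (pd β (fun y => u y α) x - pd α (fun y => u y β) x)

/-!
With `D_{αβ} = ∂_β u_α` and the commutator `C = Q'ΔQ - ΔQ Q'`, cyclicity of the trace gives
`tr((ΩQ' - Q'Ω)ΔQ) = tr(ΩC)`. Since `Q'` and `ΔQ` are symmetric, `C` is antisymmetric, so only the
antisymmetric part of `D`, namely `Ω`, contributes to `tr(DC)`, and
`tr(ΩC) = tr(DC) = -Σ C_{αβ} D_{αβ}`. Integrating `Σ ∂_β C_{αβ} u_α` by parts gives the same
integral.
-/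

section MatrixIdentities

open Matrix

variable {n R : Type*} [Fintype n] [CommRing R]

lemma trace_commutator_mul (A B C : Matrix n n R) :
    ((A * B - B * A) * C).trace = (A * (B * C - C * B)).trace := by
  have hcycle : (B * A * C).trace = (A * (C * B)).trace := by
    rw [Matrix.mul_assoc, trace_mul_comm, Matrix.mul_assoc]
  rw [sub_mul, mul_sub, trace_sub, trace_sub, Matrix.mul_assoc A B C, hcycle]

lemma transpose_commutator_of_isSymm {A B : Matrix n n R} (hA : A.IsSymm) (hB : B.IsSymm) :
    (A * B - B * A)ᵀ = -(A * B - B * A) := by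
  rw [transpose_sub, transpose_mul, transpose_mul, hA.eq, hB.eq, neg_sub]

lemma trace_mul_of_transpose_eq_neg (A : Matrix n n R) {B : Matrix n n R} (hB : Bᵀ = -B) :
    (A * B).trace = -(B * Aᵀ).trace := by
  rw [← trace_transpose, transpose_mul, hB, neg_mul, trace_neg]

lemma trace_sub_transpose_mul_of_transpose_eq_neg (A : Matrix n n R) {B : Matrix n n R}
    (hB : Bᵀ = -B) :
    ((A - Aᵀ) * B).trace = 2 * (A * B).trace := by
  rw [sub_mul, trace_sub, trace_mul_comm Aᵀ, ← neg_eq_iff_eq_neg.mpr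
    (trace_mul_of_transpose_eq_neg A hB), sub_neg_eq_add, two_mul]

end MatrixIdentities

section PartialDerivatives

variable {d : ℕ} {f g : (Fin d → ℝ) → ℝ}

lemma contDiff_pd {m k : WithTop ℕ∞} (hf : ContDiff ℝ k f) (γ : Fin d) (hmk : m + 1 ≤ k) :
    ContDiff ℝ m (pd γ f) :=
  (hf.fderiv_right hmk).clm_apply contDiff_const

lemma contDiff_lap {m k : WithTop ℕ∞} (hf : ContDiff ℝ k f) (hmk : m + 1 + 1 ≤ k) :
    ContDiff ℝ m (lap f) :=
  ContDiff.sum fun γ _ => contDiff_pd (contDiff_pd hf γ hmk) γ le_rfl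

lemma contDiff_lap_entries {ι κ : Type*} [Fintype ι] [Fintype κ] {m k : WithTop ℕ∞}
    {Q : (Fin d → ℝ) → ι → κ → ℝ} (hQ : ContDiff ℝ k Q) (hmk : m + 1 + 1 ≤ k) :
    ContDiff ℝ m fun x α β => lap (fun y => Q y α β) x :=
  contDiff_pi.2 fun α => contDiff_pi.2 fun β =>
    contDiff_lap (contDiff_pi.1 (contDiff_pi.1 hQ α) β) hmk

lemma lap_entry_comm {ι : Type*} {Q : (Fin d → ℝ) → ι → ι → ℝ}
    (hQ : ∀ x α β, Q x α β = Q x β α) (x : Fin d → ℝ) (α β : ι) :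
    lap (fun y => Q y α β) x = lap (fun y => Q y β α) x := by
  simp only [hQ _ α β]

lemma integrable_pd_mul (hf : ContDiff ℝ 1 f) (hg : Continuous g) (hgs : HasCompactSupport g)
    (β : Fin d) : Integrable fun x => pd β f x * g x :=
  ((contDiff_pd (m := 0) hf β (by simp)).continuous.mul hg).integrable_of_hasCompactSupport
    hgs.mul_left

lemma integrable_mul_pd (hf : Continuous f) (hg : ContDiff ℝ 1 g) (hgs : HasCompactSupport g)
    (β : Fin d) : Integrable fun x => f x * pd β g x :=
  (hf.mul (contDiff_pd (m := 0) hg β (by simp)).continuous).integrable_of_hasCompactSupport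
    (hgs.fderiv_apply (𝕜 := ℝ) (Pi.single β 1)).mul_left

lemma integral_pd_mul_eq_neg_integral_mul_pd (hf : ContDiff ℝ 1 f) (hg : ContDiff ℝ 1 g)
    (hgs : HasCompactSupport g) (β : Fin d) :
    ∫ x, pd β f x * g x = -∫ x, f x * pd β g x := by
  have hfg : Integrable fun x => f x * g x :=
    (hf.continuous.mul hg.continuous).integrable_of_hasCompactSupport hgs.mul_left
  exact (neg_eq_iff_eq_neg.mpr <| integral_mul_fderiv_eq_neg_fderiv_mul_of_integrable
    (integrable_pd_mul hf hg.continuous hgs β) (integrable_mul_pd hf.continuous hg hgs β) hfg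
    (fun x _ => hf.differentiable one_ne_zero x)
    (fun x _ => hg.differentiable one_ne_zero x)).symm

lemma integral_sum_pd_mul_eq_neg_integral_sum_mul_pd {ι : Type*} (s : Finset ι) (b : ι → Fin d)
    {F G : ι → (Fin d → ℝ) → ℝ} (hF : ∀ i ∈ s, ContDiff ℝ 1 (F i))
    (hG : ∀ i ∈ s, ContDiff ℝ 1 (G i)) (hGs : ∀ i ∈ s, HasCompactSupport (G i)) :
    ∫ x, ∑ i ∈ s, pd (b i) (F i) x * G i x = -∫ x, ∑ i ∈ s, F i x * pd (b i) (G i) x := by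
  rw [integral_finsetSum s fun i hi =>
      integrable_pd_mul (hF i hi) (hG i hi).continuous (hGs i hi) (b i),
    integral_finsetSum s fun i hi =>
      integrable_mul_pd (hF i hi).continuous (hG i hi) (hGs i hi) (b i),
    ← Finset.sum_neg_distrib]
  exact Finset.sum_congr rfl fun i hi =>
    integral_pd_mul_eq_neg_integral_mul_pd (hF i hi) (hG i hi) (hGs i hi) (b i)

lemma integral_sum_pd_mul_component_eq_neg {ι κ : Type*} [Fintype ι] [Fintype κ]
    {F : ι → Fin d → κ → (Fin d → ℝ) → ℝ} {u : (Fin d → ℝ) → ι → ℝ}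
    (hF : ∀ α β γ, ContDiff ℝ 1 (F α β γ)) (hu : ContDiff ℝ 1 u) (husupp : HasCompactSupport u) :
    ∫ x, ∑ α, ∑ β, ∑ γ, pd β (F α β γ) x * u x α
      = -∫ x, ∑ α, ∑ β, ∑ γ, F α β γ x * pd β (fun y => u y α) x := by
  simpa only [Fintype.sum_prod_type] using
    integral_sum_pd_mul_eq_neg_integral_sum_mul_pd (Finset.univ : Finset (ι × Fin d × κ))
      (fun i => i.2.1) (F := fun i => F i.1 i.2.1 i.2.2) (G := fun i y => u y i.1)
      (fun i _ => hF i.1 i.2.1 i.2.2) (fun i _ => contDiff_pi.1 hu i.1)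
      (fun i _ => husupp.comp_left (g := fun v : ι → ℝ => v i.1) rfl)

end PartialDerivatives

section Corotation

open Matrix

variable {d : ℕ}

/-- The velocity gradient `D_{αβ} = ∂_β u_α`; its rows are indexed by the components of `u`. -/
noncomputable def velocityGradient (u : (Fin d → ℝ) → Fin d → ℝ) (x : Fin d → ℝ) :
    Matrix (Fin d) (Fin d) ℝ :=
  of fun α β => pd β (fun y => u y α) x

lemma of_vort_eq_smul (u : (Fin d → ℝ) → Fin d → ℝ) (x : Fin d → ℝ) :
    of (vort u x) = (1 / 2 : ℝ) • (velocityGradient u x - (velocityGradient u x)ᵀ) :=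
  rfl

lemma trace_vort_mul_of_transpose_eq_neg (u : (Fin d → ℝ) → Fin d → ℝ) (x : Fin d → ℝ)
    {C : Matrix (Fin d) (Fin d) ℝ} (hC : Cᵀ = -C) :
    (of (vort u x) * C).trace = -(C * (velocityGradient u x)ᵀ).trace := by
  rw [of_vort_eq_smul, smul_mul, trace_smul, trace_sub_transpose_mul_of_transpose_eq_neg _ hC,
    trace_mul_of_transpose_eq_neg _ hC, smul_eq_mul]
  ring

lemma trace_vort_commutator_mul (u : (Fin d → ℝ) → Fin d → ℝ) (x : Fin d → ℝ)
    {P H : Matrix (Fin d) (Fin d) ℝ} (hP : P.IsSymm) (hH : H.IsSymm) :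
    ((of (vort u x) * P - P * of (vort u x)) * H).trace
      = -((P * H - H * P) * (velocityGradient u x)ᵀ).trace := by
  rw [trace_commutator_mul,
    trace_vort_mul_of_transpose_eq_neg u x (transpose_commutator_of_isSymm hP hH)]

lemma sum_vort_commutator_mul (u : (Fin d → ℝ) → Fin d → ℝ) (x : Fin d → ℝ)
    {P H : Fin d → Fin d → ℝ} (hP : ∀ α β, P α β = P β α) (hH : ∀ α β, H α β = H β α) :
    ∑ α, ∑ β, (∑ γ, (vort u x α γ * P γ β - P α γ * vort u x γ β)) * H β α
      = -∑ α, ∑ β, ∑ γ, (P α γ * H γ β - H α γ * P γ β) * pd β (fun y => u y α) x := by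
  have htrace := trace_vort_commutator_mul u x (P := of P) (H := of H)
    (IsSymm.ext fun α β => hP β α) (IsSymm.ext fun α β => hH β α)
  simpa only [velocityGradient, trace, diag_apply, mul_apply, Matrix.sub_apply, transpose_apply,
    of_apply, ← Finset.sum_sub_distrib, Finset.sum_mul] using htrace

theorem corotation_stress_cancellation_general {P H : (Fin d → ℝ) → Fin d → Fin d → ℝ}
    {u : (Fin d → ℝ) → Fin d → ℝ} (hP : ContDiff ℝ 1 P) (hH : ContDiff ℝ 1 H)
    (hu : ContDiff ℝ 1 u) (husupp : HasCompactSupport u)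
    (hPsymm : ∀ x α β, P x α β = P x β α) (hHsymm : ∀ x α β, H x α β = H x β α) :
    (∫ x : Fin d → ℝ, ∑ α, ∑ β,
        (∑ γ, (vort u x α γ * P x γ β - P x α γ * vort u x γ β)) * H x β α)
    - (∫ x : Fin d → ℝ, ∑ α, ∑ β, ∑ γ,
        pd β (fun y => P y α γ * H y γ β - H y α γ * P y γ β) x * u x α) = 0 := by
  have hPentry (α β) : ContDiff ℝ 1 fun x => P x α β := contDiff_pi.1 (contDiff_pi.1 hP α) β
  have hHentry (α β) : ContDiff ℝ 1 fun x => H x α β := contDiff_pi.1 (contDiff_pi.1 hH α) β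
  have hstress (α β γ) : ContDiff ℝ 1 fun x => P x α γ * H x γ β - H x α γ * P x γ β :=
    ((hPentry α γ).mul (hHentry γ β)).sub ((hHentry α γ).mul (hPentry γ β))
  rw [integral_sum_pd_mul_component_eq_neg hstress hu husupp, ← integral_neg, sub_eq_zero]
  exact integral_congr_ae <| .of_forall fun x =>
    sum_vort_commutator_mul u x (hPsymm x) (hHsymm x)

end Corotation

/-- For smooth compactly supported symmetric matrix fields `Q', Q` on `ℝ^d` and a smooth
compactly supported vector field `u`, with `Ω` the vorticity of `u`,
`∫ tr((ΩQ' − Q'Ω)ΔQ) dx − ∫ Σ_{α,β,γ} ∂_β(Q'_{αγ}ΔQ_{γβ} − ΔQ_{αγ}Q'_{γβ}) u_α dx = 0`. -/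
theorem corotation_stress_cancellation (d : ℕ) (hd : 1 ≤ d)
    (Q' Q : (Fin d → ℝ) → Fin d → Fin d → ℝ) (u : (Fin d → ℝ) → Fin d → ℝ)
    (hQ'sm : ContDiff ℝ (⊤ : ℕ∞) Q') (hQsm : ContDiff ℝ (⊤ : ℕ∞) Q)
    (husm : ContDiff ℝ (⊤ : ℕ∞) u)
    (hQ'supp : HasCompactSupport Q') (hQsupp : HasCompactSupport Q)
    (husupp : HasCompactSupport u)
    (hQ'symm : ∀ x α β, Q' x α β = Q' x β α) (hQsymm : ∀ x α β, Q x α β = Q x β α) :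
    (∫ x : Fin d → ℝ, ∑ α, ∑ β,
        (∑ γ, (vort u x α γ * Q' x γ β - Q' x α γ * vort u x γ β))
          * lap (fun y => Q y β α) x)
    - (∫ x : Fin d → ℝ, ∑ α, ∑ β, ∑ γ,
        pd β (fun y => Q' y α γ * lap (fun z => Q z γ β) y
          - lap (fun z => Q z α γ) y * Q' y γ β) x * u x α) = 0 := by
  exact corotation_stress_cancellation_general (hQ'sm.of_le (by simp))
    ((contDiff_lap_entries hQsm (by simp)).of_le (by simp : (1 : WithTop ℕ∞) ≤ (⊤ : ℕ∞)))
    (husm.of_le (by simp)) husupp hQ'symm (lap_entry_comm hQsymm)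
end

section
/- Let d ≥ 1. Let Q : ℝ^d → M_d(ℝ) be a smooth compactly supported matrix-valued field and let u : ℝ^d → ℝ^d be a smooth compactly supported vector field with div u = Σ_γ ∂_γ u_γ = 0. Then ∫_{ℝ^d} Σ_{α,β,γ} u_γ (∂_γ Q_{αβ}) (ΔQ_{αβ}) dx + ∫_{ℝ^d} Σ_{α,β,γ,δ} (∂_α Q_{γδ}) (∂_β Q_{γδ}) (∂_β u_α) dx = 0. -/
open MeasureTheory

/-! Put `J = (u · ∇q) ∇q - ½ |∇q|² u` for each scalar component `q` of the field. In `div J` the two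
terms containing second derivatives of `q` other than `Δq` cancel because the Hessian is symmetric,
which leaves `(u · ∇q) Δq + ∇q ⊗ ∇q : ∇u - ½ |∇q|² div u`. The last term vanishes for
solenoidal `u`, and as `u` has compact support, so does `J`, whose divergence integrates to zero. -/

open scoped Matrix

section DotProduct

variable {E ι : Type*} [NormedAddCommGroup E] [NormedSpace ℝ E] [Fintype ι] {F G : E → ι → ℝ}

theorem differentiableAt_dotProduct {x : E} (hF : DifferentiableAt ℝ F x)
    (hG : DifferentiableAt ℝ G x) : DifferentiableAt ℝ (fun y => F y ⬝ᵥ G y) x := by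
  unfold dotProduct
  fun_prop

theorem contDiff_dotProduct {n : WithTop ℕ∞} (hF : ContDiff ℝ n F) (hG : ContDiff ℝ n G) :
    ContDiff ℝ n (fun y => F y ⬝ᵥ G y) := by
  unfold dotProduct
  fun_prop

end DotProduct

theorem hasCompactSupport_apply {X ι R : Type*} [TopologicalSpace X] [Zero R] {V : X → ι → R}
    (hV : HasCompactSupport V) (i : ι) : HasCompactSupport (fun x => V x i) :=
  hV.comp_left (g := fun v : ι → R => v i) rfl

section PartialDerivatives

variable {d : ℕ} {f g : (Fin d → ℝ) → ℝ} {x : Fin d → ℝ}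

theorem contDiffAt_pd {m n : WithTop ℕ∞} (γ : Fin d) (hf : ContDiffAt ℝ n f x) (hmn : m + 1 ≤ n) :
    ContDiffAt ℝ m (pd γ f) x :=
  (hf.fderiv_right hmn).clm_apply contDiffAt_const

theorem continuous_pd (γ : Fin d) (hf : ContDiff ℝ 1 f) : Continuous (pd γ f) :=
  continuous_iff_continuousAt.2 fun _ =>
    (contDiffAt_pd (m := 0) γ hf.contDiffAt (zero_add 1).le).continuousAt

theorem hasCompactSupport_pd (γ : Fin d) (hf : HasCompactSupport f) :
    HasCompactSupport (pd γ f) :=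
  hf.fderiv_apply ℝ _

theorem pd_sub (γ : Fin d) (hf : DifferentiableAt ℝ f x) (hg : DifferentiableAt ℝ g x) :
    pd γ (fun y => f y - g y) x = pd γ f x - pd γ g x := by
  simp [pd, fderiv_fun_sub hf hg]

theorem pd_const_mul (γ : Fin d) (c : ℝ) (hf : DifferentiableAt ℝ f x) :
    pd γ (fun y => c * f y) x = c * pd γ f x := by
  simp [pd, fderiv_const_mul hf]

theorem pd_mul (γ : Fin d) (hf : DifferentiableAt ℝ f x) (hg : DifferentiableAt ℝ g x) :
    pd γ (fun y => f y * g y) x = pd γ f x * g x + f x * pd γ g x := by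
  simp only [pd, fderiv_fun_mul hf hg, _root_.add_apply, _root_.smul_apply, smul_eq_mul]
  ring

theorem pd_dotProduct {ι : Type*} [Fintype ι] (γ : Fin d) {F G : (Fin d → ℝ) → ι → ℝ}
    (hF : DifferentiableAt ℝ F x) (hG : DifferentiableAt ℝ G x) :
    pd γ (fun y => F y ⬝ᵥ G y) x
      = ∑ i, (pd γ (fun y => F y i) x * G x i + F x i * pd γ (fun y => G y i) x) := by
  have hF' := differentiableAt_pi.1 hF
  have hG' := differentiableAt_pi.1 hG
  calc pd γ (fun y => F y ⬝ᵥ G y) x = ∑ i, pd γ (fun y => F y i * G y i) x := by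
        simp only [pd, dotProduct]
        rw [fderiv_fun_sum fun i _ => (hF' i).fun_mul (hG' i), _root_.sum_apply]
    _ = _ := Finset.sum_congr rfl fun i _ => pd_mul γ (hF' i) (hG' i)

theorem pd_comm (α β : Fin d) (hf : ContDiffAt ℝ 2 f x) :
    pd α (pd β f) x = pd β (pd α f) x := by
  have hdf : DifferentiableAt ℝ (fderiv ℝ f) x :=
    (hf.fderiv_right (m := 1) (by norm_num)).differentiableAt one_ne_zero
  have pd_fderiv_apply (v : Fin d → ℝ) (γ : Fin d) :
      pd γ (fun y => fderiv ℝ f y v) x = fderiv ℝ (fderiv ℝ f) x (Pi.single γ 1) v := by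
    simp [pd, fderiv_clm_apply hdf (differentiableAt_const v)]
  exact (pd_fderiv_apply _ α).trans <|
    (hf.isSymmSndFDerivAt (by simp) _ _).trans (pd_fderiv_apply _ β).symm

theorem integrable_pd (μ : Measure (Fin d → ℝ)) [IsFiniteMeasureOnCompacts μ] (γ : Fin d)
    (hf : ContDiff ℝ 1 f) (hfsupp : HasCompactSupport f) : Integrable (pd γ f) μ :=
  (continuous_pd γ hf).integrable_of_hasCompactSupport (hasCompactSupport_pd γ hfsupp)

theorem integral_pd_eq_zero (μ : Measure (Fin d → ℝ)) [μ.IsAddHaarMeasure] (γ : Fin d)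
    (hf : ContDiff ℝ 1 f) (hfsupp : HasCompactSupport f) : ∫ x, pd γ f x ∂μ = 0 := by
  have hf_int : Integrable f μ := hf.continuous.integrable_of_hasCompactSupport hfsupp
  simpa [pd] using integral_mul_fderiv_eq_neg_fderiv_mul_of_integrable (μ := μ)
    (f := fun _ => (1 : ℝ)) (g := f) (v := Pi.single γ 1)
    (by simp) (by simpa [pd] using! integrable_pd μ γ hf hfsupp) (by simpa using hf_int)
    (fun _ _ => differentiableAt_const _) (fun x _ => hf.differentiable one_ne_zero x)

end PartialDerivatives

section VectorFields

variable {d : ℕ}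

/-- The gradient of a scalar function on `ℝ^d`, as the vector of its partial derivatives `pd`. -/
noncomputable def grad (q : (Fin d → ℝ) → ℝ) (x : Fin d → ℝ) : Fin d → ℝ :=
  fun γ => pd γ q x

/-- The divergence of a vector field on `ℝ^d`, expressed through the partial derivatives `pd`. -/
noncomputable def divergence (V : (Fin d → ℝ) → Fin d → ℝ) (x : Fin d → ℝ) : ℝ :=
  ∑ γ, pd γ (fun y => V y γ) x

theorem contDiffAt_grad {m n : WithTop ℕ∞} {q : (Fin d → ℝ) → ℝ} {x : Fin d → ℝ}
    (hq : ContDiffAt ℝ n q x) (hmn : m + 1 ≤ n) : ContDiffAt ℝ m (grad q) x :=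
  contDiffAt_pi.2 fun γ => contDiffAt_pd γ hq hmn

theorem contDiff_grad {m n : WithTop ℕ∞} {q : (Fin d → ℝ) → ℝ}
    (hq : ContDiff ℝ n q) (hmn : m + 1 ≤ n) : ContDiff ℝ m (grad q) :=
  contDiff_iff_contDiffAt.2 fun _ => contDiffAt_grad hq.contDiffAt hmn

theorem differentiableAt_grad {q : (Fin d → ℝ) → ℝ} {x : Fin d → ℝ} (hq : ContDiffAt ℝ 2 q x) :
    DifferentiableAt ℝ (grad q) x :=
  (contDiffAt_grad (m := 1) hq one_add_one_eq_two.le).differentiableAt one_ne_zero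

theorem continuous_divergence {V : (Fin d → ℝ) → Fin d → ℝ} (hV : ContDiff ℝ 1 V) :
    Continuous (divergence V) :=
  continuous_finsetSum _ fun γ _ => continuous_pd γ (contDiff_pi.1 hV γ)

theorem divergence_sub {V W : (Fin d → ℝ) → Fin d → ℝ} {x : Fin d → ℝ}
    (hV : DifferentiableAt ℝ V x) (hW : DifferentiableAt ℝ W x) :
    divergence (fun y => V y - W y) x = divergence V x - divergence W x := by
  simp only [divergence, ← Finset.sum_sub_distrib]
  exact Finset.sum_congr rfl fun γ _ =>
    pd_sub γ (differentiableAt_pi.1 hV γ) (differentiableAt_pi.1 hW γ)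

theorem divergence_smul {f : (Fin d → ℝ) → ℝ} {V : (Fin d → ℝ) → Fin d → ℝ} {x : Fin d → ℝ}
    (hf : DifferentiableAt ℝ f x) (hV : DifferentiableAt ℝ V x) :
    divergence (fun y => f y • V y) x = grad f x ⬝ᵥ V x + f x * divergence V x := by
  simp only [divergence, grad, dotProduct, Finset.mul_sum, ← Finset.sum_add_distrib]
  exact Finset.sum_congr rfl fun γ _ => pd_mul γ hf (differentiableAt_pi.1 hV γ)

theorem integral_divergence_eq_zero (μ : Measure (Fin d → ℝ)) [μ.IsAddHaarMeasure]
    {V : (Fin d → ℝ) → Fin d → ℝ} (hV : ContDiff ℝ 1 V) (hVsupp : HasCompactSupport V) :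
    ∫ x, divergence V x ∂μ = 0 := by
  have hVγ (γ : Fin d) : ContDiff ℝ 1 (fun y => V y γ) := contDiff_pi.1 hV γ
  simp only [divergence]
  rw [integral_finsetSum _ fun γ _ => integrable_pd μ γ (hVγ γ) (hasCompactSupport_apply hVsupp γ)]
  exact Finset.sum_eq_zero fun γ _ =>
    integral_pd_eq_zero μ γ (hVγ γ) (hasCompactSupport_apply hVsupp γ)

end VectorFields

section RellichIdentity

variable {d : ℕ} {u : (Fin d → ℝ) → Fin d → ℝ} {q : (Fin d → ℝ) → ℝ}

/-- The transport density `(u · ∇q) Δq` of a scalar component `q` of the order parameter. -/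
noncomputable def transportDensity (u : (Fin d → ℝ) → Fin d → ℝ) (q : (Fin d → ℝ) → ℝ)
    (x : Fin d → ℝ) : ℝ :=
  ∑ γ, u x γ * pd γ q x * lap q x

/-- The contraction `∇q ⊗ ∇q : ∇u` of the elastic stress of a scalar component `q` of the order
parameter with the velocity gradient, whose `(α, β)` entry is `∂_β u_α`. -/
noncomputable def elasticDensity (u : (Fin d → ℝ) → Fin d → ℝ) (q : (Fin d → ℝ) → ℝ)
    (x : Fin d → ℝ) : ℝ :=
  ∑ α, ∑ β, pd α q x * pd β q x * pd β (fun y => u y α) x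

/-- The Rellich–Pohozaev vector field `(u · ∇q) ∇q - ½ |∇q|² u`, whose divergence contains both the
transport density and the elastic density of `q`. -/
noncomputable def rellichField (u : (Fin d → ℝ) → Fin d → ℝ) (q : (Fin d → ℝ) → ℝ)
    (x : Fin d → ℝ) : Fin d → ℝ :=
  (u x ⬝ᵥ grad q x) • grad q x - (1 / 2 * (grad q x ⬝ᵥ grad q x)) • u x

theorem grad_half_dotProduct_grad_self {x : Fin d → ℝ} (hq : DifferentiableAt ℝ (grad q) x)
    (α : Fin d) :
    grad (fun y => 1 / 2 * (grad q y ⬝ᵥ grad q y)) x α = ∑ β, pd α (pd β q) x * pd β q x := by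
  calc grad (fun y => 1 / 2 * (grad q y ⬝ᵥ grad q y)) x α
      = 1 / 2 * pd α (fun y => grad q y ⬝ᵥ grad q y) x :=
        pd_const_mul α _ (differentiableAt_dotProduct hq hq)
    _ = 1 / 2 * ∑ β, (pd α (pd β q) x * pd β q x + pd β q x * pd α (pd β q) x) :=
        congrArg _ (pd_dotProduct α hq hq)
    _ = ∑ β, pd α (pd β q) x * pd β q x := by
        rw [Finset.mul_sum]
        exact Finset.sum_congr rfl fun β _ => by ring

theorem grad_dotProduct_grad_dotProduct_grad {x : Fin d → ℝ}
    (hu : DifferentiableAt ℝ u x) (hq : ContDiffAt ℝ 2 q x) :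
    grad (fun y => u y ⬝ᵥ grad q y) x ⬝ᵥ grad q x
      = elasticDensity u q x + grad (fun y => 1 / 2 * (grad q y ⬝ᵥ grad q y)) x ⬝ᵥ u x := by
  have hdq := differentiableAt_grad hq
  calc grad (fun y => u y ⬝ᵥ grad q y) x ⬝ᵥ grad q x
      = ∑ β, ∑ α, (pd β (fun y => u y α) x * pd α q x + u x α * pd β (pd α q) x) * pd β q x := by
        simp only [dotProduct, ← Finset.sum_mul]
        exact Finset.sum_congr rfl fun β _ => congrArg (· * pd β q x) (pd_dotProduct β hu hdq)
    _ = ∑ α, ∑ β, (pd α q x * pd β q x * pd β (fun y => u y α) x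
          + pd α (pd β q) x * pd β q x * u x α) := by
        rw [Finset.sum_comm]
        refine Finset.sum_congr rfl fun α _ => Finset.sum_congr rfl fun β _ => ?_
        rw [pd_comm β α hq]
        ring
    _ = elasticDensity u q x + grad (fun y => 1 / 2 * (grad q y ⬝ᵥ grad q y)) x ⬝ᵥ u x := by
        simp only [Finset.sum_add_distrib, ← Finset.sum_mul, elasticDensity,
          ← grad_half_dotProduct_grad_self hdq, dotProduct]

theorem divergence_rellichField {x : Fin d → ℝ}
    (hu : DifferentiableAt ℝ u x) (hq : ContDiffAt ℝ 2 q x) :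
    divergence (rellichField u q) x = transportDensity u q x + elasticDensity u q x
      - 1 / 2 * ((grad q x ⬝ᵥ grad q x) * divergence u x) := by
  have hdq := differentiableAt_grad hq
  have hudq := differentiableAt_dotProduct hu hdq
  have hsq := (differentiableAt_dotProduct hdq hdq).const_mul (1 / 2)
  have transport_eq : transportDensity u q x = (u x ⬝ᵥ grad q x) * divergence (grad q) x :=
    (Finset.sum_mul ..).symm
  unfold rellichField
  rw [divergence_sub (hudq.fun_smul hdq) (hsq.fun_smul hu), divergence_smul hudq hdq,
    divergence_smul hsq hu, grad_dotProduct_grad_dotProduct_grad hu hq, transport_eq]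
  ring

theorem contDiff_rellichField (hu : ContDiff ℝ 1 u) (hq : ContDiff ℝ 2 q) :
    ContDiff ℝ 1 (rellichField u q) := by
  have hdq : ContDiff ℝ 1 (grad q) := contDiff_grad hq one_add_one_eq_two.le
  exact ((contDiff_dotProduct hu hdq).smul hdq).sub
    ((contDiff_const.mul (contDiff_dotProduct hdq hdq)).smul hu)

theorem hasCompactSupport_rellichField (hu : HasCompactSupport u) :
    HasCompactSupport (rellichField u q) :=
  hu.mono fun x => mt fun hx => by simp [rellichField, hx]

section Integrability

variable (μ : Measure (Fin d → ℝ)) [IsFiniteMeasureOnCompacts μ]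

theorem integrable_transportDensity (hu : Continuous u) (husupp : HasCompactSupport u)
    (hq : ContDiff ℝ 2 q) : Integrable (transportDensity u q) μ := by
  have hpd (γ : Fin d) : Continuous (pd γ q) := continuous_pd γ (hq.of_le one_le_two)
  have hlap : Continuous (lap q) := continuous_divergence (contDiff_grad hq one_add_one_eq_two.le)
  exact integrable_finsetSum _ fun γ _ =>
    ((((continuous_apply γ).comp hu).mul (hpd γ)).mul hlap).integrable_of_hasCompactSupport
      (hasCompactSupport_apply husupp γ).mul_right.mul_right

theorem integrable_elasticDensity (hu : ContDiff ℝ 1 u) (husupp : HasCompactSupport u)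
    (hq : ContDiff ℝ 1 q) : Integrable (elasticDensity u q) μ :=
  integrable_finsetSum _ fun α _ => integrable_finsetSum _ fun β _ =>
    (((continuous_pd α hq).mul (continuous_pd β hq)).mul
      (continuous_pd β (contDiff_pi.1 hu α))).integrable_of_hasCompactSupport
        (hasCompactSupport_pd β (hasCompactSupport_apply husupp α)).mul_left

theorem integrable_dotProduct_grad_self_mul_divergence (hu : ContDiff ℝ 1 u)
    (husupp : HasCompactSupport u) (hq : ContDiff ℝ 1 q) :
    Integrable (fun x => (grad q x ⬝ᵥ grad q x) * divergence u x) μ := by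
  have hdq : ContDiff ℝ 0 (grad q) := contDiff_grad hq (zero_add 1).le
  simp only [divergence, Finset.mul_sum]
  exact integrable_finsetSum _ fun γ _ =>
    ((contDiff_dotProduct hdq hdq).continuous.mul
      (continuous_pd γ (contDiff_pi.1 hu γ))).integrable_of_hasCompactSupport
        (hasCompactSupport_pd γ (hasCompactSupport_apply husupp γ)).mul_left

end Integrability

theorem integral_transportDensity_add_integral_elasticDensity
    (μ : Measure (Fin d → ℝ)) [μ.IsAddHaarMeasure]
    (hu : ContDiff ℝ 1 u) (husupp : HasCompactSupport u) (hq : ContDiff ℝ 2 q) :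
    (∫ x, transportDensity u q x ∂μ) + ∫ x, elasticDensity u q x ∂μ
      = 1 / 2 * ∫ x, (grad q x ⬝ᵥ grad q x) * divergence u x ∂μ := by
  have hq₁ : ContDiff ℝ 1 q := hq.of_le one_le_two
  have htransport := integrable_transportDensity μ hu.continuous husupp hq
  have helastic := integrable_elasticDensity μ hu husupp hq₁
  have hdiv := (integrable_dotProduct_grad_self_mul_divergence μ hu husupp hq₁).const_mul (1 / 2)
  have hflux := integral_divergence_eq_zero μ (contDiff_rellichField hu hq)
    (hasCompactSupport_rellichField husupp)
  simp only [divergence_rellichField (hu.differentiable one_ne_zero _) hq.contDiffAt] at hflux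
  rw [integral_sub (htransport.fun_add helastic) hdiv, integral_add htransport helastic,
    integral_const_mul] at hflux
  exact sub_eq_zero.1 hflux

end RellichIdentity

theorem transport_elastic_cancellation_general {d : ℕ} {ι : Type*} [Fintype ι]
    (μ : Measure (Fin d → ℝ)) [μ.IsAddHaarMeasure]
    {Q : (Fin d → ℝ) → ι → ℝ} {u : (Fin d → ℝ) → Fin d → ℝ}
    (hQ : ContDiff ℝ 2 Q) (hu : ContDiff ℝ 1 u) (husupp : HasCompactSupport u) :
    (∫ x, ∑ i, ∑ γ, u x γ * pd γ (fun y => Q y i) x * lap (fun y => Q y i) x ∂μ)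
    + (∫ x, ∑ α, ∑ β, ∑ i, pd α (fun y => Q y i) x * pd β (fun y => Q y i) x
          * pd β (fun y => u y α) x ∂μ)
      = 1 / 2 * ∫ x, (∑ i, ∑ γ, pd γ (fun y => Q y i) x ^ 2)
          * ∑ γ, pd γ (fun y => u y γ) x ∂μ := by
  have hQi (i : ι) : ContDiff ℝ 2 (fun y => Q y i) := contDiff_pi.1 hQ i
  have hQi₁ (i : ι) : ContDiff ℝ 1 (fun y => Q y i) := (hQi i).of_le one_le_two
  have elastic_eq (x : Fin d → ℝ) :
      ∑ α, ∑ β, ∑ i, pd α (fun y => Q y i) x * pd β (fun y => Q y i) x * pd β (fun y => u y α) x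
        = ∑ i, elasticDensity u (fun y => Q y i) x :=
    (Finset.sum_congr rfl fun _ _ => Finset.sum_comm).trans Finset.sum_comm
  have grad_sq_eq (x : Fin d → ℝ) :
      (∑ i, ∑ γ, pd γ (fun y => Q y i) x ^ 2) * ∑ γ, pd γ (fun y => u y γ) x
        = ∑ i, (grad (fun y => Q y i) x ⬝ᵥ grad (fun y => Q y i) x) * divergence u x := by
    simp only [sq, Finset.sum_mul, grad, dotProduct, divergence]
  change (∫ x, ∑ i, transportDensity u (fun y => Q y i) x ∂μ) + _ = _
  simp only [elastic_eq, grad_sq_eq]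
  rw [integral_finsetSum _ fun i _ => integrable_transportDensity μ hu.continuous husupp (hQi i),
    integral_finsetSum _ fun i _ => integrable_elasticDensity μ hu husupp (hQi₁ i),
    integral_finsetSum _ fun i _ =>
      integrable_dotProduct_grad_self_mul_divergence μ hu husupp (hQi₁ i),
    ← Finset.sum_add_distrib, Finset.mul_sum]
  exact Finset.sum_congr rfl fun i _ =>
    integral_transportDensity_add_integral_elasticDensity μ hu husupp (hQi i)

/-- For a smooth compactly supported matrix field `Q` on `ℝ^d` and a smooth compactly
supported divergence-free vector field `u`,
`∫ Σ_{α,β,γ} u_γ (∂_γ Q_{αβ})(ΔQ_{αβ}) dx + ∫ Σ_{α,β,γ,δ} (∂_α Q_{γδ})(∂_β Q_{γδ})(∂_β u_α) dx = 0`. -/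
theorem transport_elastic_cancellation (d : ℕ) (hd : 1 ≤ d)
    (Q : (Fin d → ℝ) → Fin d → Fin d → ℝ) (u : (Fin d → ℝ) → Fin d → ℝ)
    (hQsm : ContDiff ℝ (⊤ : ℕ∞) Q) (husm : ContDiff ℝ (⊤ : ℕ∞) u)
    (hQsupp : HasCompactSupport Q) (husupp : HasCompactSupport u)
    (hdiv : ∀ x, ∑ γ, pd γ (fun y => u y γ) x = 0) :
    (∫ x : Fin d → ℝ, ∑ α, ∑ β, ∑ γ,
        u x γ * pd γ (fun y => Q y α β) x * lap (fun y => Q y α β) x)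
    + (∫ x : Fin d → ℝ, ∑ α, ∑ β, ∑ γ, ∑ δ,
        pd α (fun y => Q y γ δ) x * pd β (fun y => Q y γ δ) x
          * pd β (fun y => u y α) x) = 0 := by
  have hQ : ContDiff ℝ 2 (fun x (p : Fin d × Fin d) => Q x p.1 p.2) :=
    contDiff_pi.2 fun p => contDiff_infty.1 (contDiff_pi.1 (contDiff_pi.1 hQsm p.1) p.2) 2
  simpa [Fintype.sum_prod_type, hdiv] using
    transport_elastic_cancellation_general volume hQ (contDiff_infty.1 husm 1) husupp
end
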